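/- Let N ∈ ℕ, N ≥ 4, ω = e^{2πi/3}, β = ω − 1 and D = {0, ±1, ±ω, ±ω²}. There are exactly 12 distinct Eisenstein integers x ∈ ℤ[ω] not divisible by β such that x has a 2-NAF (β, D)-representation containing exactly N nonzero digits and x has exactly s_N optimal representations, where s_N = ⌊(6·2^N + 1)/7⌋. -/

import Mathlib

/-!
The nonzero digits are the sixth roots of unity `ζ i = (1 + ω) ^ i`, `i ∈ ℤ/6`. Modulo `β` they
fall into the two classes `{ζ i, ζ (i + 2), ζ (i + 4)}`. Hence a representation of `β x` has lowest
digit `0`, while one of `ζ i + β x` has one of three lowest digits and continues with a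
representation of `x`, `x + ζ (i + 3)` or `x + ζ (i + 4)`. Adding a unit raises the minimal weight
by at most one, so that a 2-NAF has minimal weight, and optimal representations are the normalized
representations of that weight.

If `z` has minimal weight `n`, let `f` be the number of its optimal representations and let `a j`,
`j ∈ ℤ/6`, be the number of normalized representations of `z + ζ j` of weight `n - 1`. Appending the
block `0 ζ i` to the 2-NAF of `z` changes `f` into `f + a i + 2 a (i + 1) + a (i + 2)`, and the new
values of `a` are `a (i + 1), a (i + 1) + a (i + 2), 0, f, 0, a i + a (i + 1)` in cyclic order
from `i`. With `t_n = (s_{n+1} - s_n) / 2`, the bounds `f ≤ s_n`, `a j + a (j + 1) ≤ t_n` and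
`a j + 2 a (j + 1), 2 a j + a (j + 1) ≤ t_{n+1}` are preserved by this recursion.

Equality `f = s_{n+1}` after appending a block forces `f = s_n` before, together with
`a i + a (i + 1) = a (i + 1) + a (i + 2) = t_n`. These two equations determine `i` from the previous
nonzero digit, except for `n = 3`, where two values of `i` are possible because of the coincidence
`t_2 = 2`. So an extremal element of weight at least `4` is given by its lowest digit and one binary
choice, and there are `6 * 2` of them.
-/

open Matrix

noncomputable section

/-- The primitive cube root of unity `ω = exp(2πi/3)`. -/
def ω : ℂ := Complex.exp (2 * Real.pi * Complex.I / 3)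

/-- The base `β = ω - 1`. -/
def eβ : ℂ := ω - 1

/-- The digit set `D = {0, ±1, ±ω, ±ω²}`. -/
def eD : Set ℂ := {0, 1, -1, ω, -ω, ω ^ 2, -ω ^ 2}

/-- The ring of Eisenstein integers `ℤ[ω]`, as a subset of `ℂ`. -/
def EisZ : Set ℂ := {x | ∃ a b : ℤ, x = (a : ℂ) + (b : ℂ) * ω}

/-- Value of a digit string `d_{n-1} ⋯ d_0`, given as a list with the least
significant digit first: `eval [d_0, d_1, …, d_{n-1}] = Σ d_j β^j`. -/
def evalE (l : List ℂ) : ℂ :=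
  l.foldr (fun d acc => d + eβ * acc) 0

/-- `l` (least significant digit first) is a `(β, D)`-representation of `x`. -/
def eIsRep (x : ℂ) (l : List ℂ) : Prop :=
  (∀ d ∈ l, d ∈ eD) ∧ evalE l = x

/-- A representation is normalized if it is empty or its leading digit
(the last entry of the LSD-first list) is nonzero. -/
def eNormalized (l : List ℂ) : Prop := l.getLast? ≠ some 0

open scoped Classical in
/-- Number of nonzero digits (Hamming weight). -/
def eweight (l : List ℂ) : ℕ := (l.filter (fun d => d ≠ 0)).length

/-- `W`-NAF property: among any `W` consecutive digits at most one is nonzero. -/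
def eNAF (W : ℕ) (l : List ℂ) : Prop :=
  ∀ j k : ℕ, j < k → k < j + W → l.getD j 0 ≠ 0 → l.getD k 0 = 0

/-- A representation of `x` is optimal if it is normalized and its number of
nonzero digits is minimal among all representations of `x`. -/
def eOptimal (x : ℂ) (l : List ℂ) : Prop :=
  eIsRep x l ∧ eNormalized l ∧ ∀ l' : List ℂ, eIsRep x l' → eweight l ≤ eweight l'

/-- The number of optimal representations of `x`. -/
def enumOpt (x : ℂ) : ℕ := Nat.card {l : List ℂ // eOptimal x l}

/-- The sequence `s_N = ⌊(6·2^N + 1)/7⌋`. -/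
def sseq (N : ℕ) : ℕ := (6 * 2 ^ N + 1) / 7

/-! ### The Eisenstein integers and their units -/

lemma ω_sq : ω ^ 2 = -1 - ω := by
  have hω : IsPrimitiveRoot ω 3 := Complex.isPrimitiveRoot_exp 3 (by norm_num)
  have hsum := hω.geom_sum_eq_zero (by norm_num)
  simp only [Finset.sum_range_succ, Finset.sum_range_zero] at hsum
  linear_combination hsum

lemma ω_im_ne_zero : ω.im ≠ 0 := by
  intro him
  have hre : ω.re ^ 2 = -1 - ω.re := by simpa [sq, him] using congrArg Complex.re ω_sq
  nlinarith [sq_nonneg (2 * ω.re + 1)]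

lemma eβ_ne_zero : eβ ≠ 0 := fun h ↦ ω_im_ne_zero (by rw [sub_eq_zero.1 h, Complex.one_im])

/-- The Eisenstein integers `EisZ` as a subring of `ℂ`. -/
def eisRing : Subring ℂ where
  carrier := EisZ
  zero_mem' := ⟨0, 0, by simp⟩
  one_mem' := ⟨1, 0, by simp⟩
  add_mem' := by
    rintro _ _ ⟨a, b, rfl⟩ ⟨c, d, rfl⟩
    exact ⟨a + c, b + d, by push_cast; ring⟩
  neg_mem' := by
    rintro _ ⟨a, b, rfl⟩
    exact ⟨-a, -b, by push_cast; ring⟩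
  mul_mem' := by
    rintro _ _ ⟨a, b, rfl⟩ ⟨c, d, rfl⟩
    refine ⟨a * c - b * d, a * d + b * c - b * d, ?_⟩
    push_cast
    linear_combination (b * d : ℂ) * ω_sq

lemma ω_mem_eisRing : ω ∈ eisRing := ⟨0, 1, by simp⟩

lemma eβ_mul_mem_eisRing {x : ℂ} (hx : x ∈ eisRing) : eβ * x ∈ eisRing :=
  mul_mem (sub_mem ω_mem_eisRing (one_mem _)) hx

lemma one_ne_eβ_mul {t : ℂ} (ht : t ∈ eisRing) : 1 ≠ eβ * t := by
  obtain ⟨a, b, rfl⟩ := ht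
  intro h
  have hcoord : (1 + a + b : ℂ) = (a - 2 * b) * ω := by
    rw [eβ] at h
    linear_combination h + (b : ℂ) * ω_sq
  have him : (a - 2 * b : ℝ) * ω.im = 0 := by simpa using (congrArg Complex.im hcoord).symm
  have hb : (a - 2 * b : ℝ) = 0 := (mul_eq_zero.1 him).resolve_right ω_im_ne_zero
  have ha : (1 + a + b : ℝ) = 0 := by
    simpa [hb, him] using congrArg Complex.re hcoord
  norm_cast at ha hb
  omega

/-- The nonzero digits, that is, the units of the Eisenstein integers, indexed cyclically:
`ζ i = (1 + ω) ^ i`. -/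
def ζ : AddChar (ZMod 6) ℂ :=
  AddChar.zmodChar 6 (ζ := 1 + ω) (by
    have hsq : (1 + ω) ^ 2 = ω := by linear_combination ω_sq
    have hcube : ω ^ 3 = 1 := by linear_combination (ω - 1) * ω_sq
    rw [pow_mul _ 2 3, hsq, hcube])

lemma ζ_add (i j : ZMod 6) : ζ (i + j) = ζ i * ζ j := AddChar.map_add_eq_mul ζ i j

lemma ζ_zero : ζ 0 = 1 := AddChar.map_zero_eq_one ζ

lemma ζ_one : ζ 1 = 1 + ω := pow_one _

lemma ζ_two : ζ 2 = ω := by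
  rw [← one_add_one_eq_two, ζ_add, ζ_one]
  linear_combination ω_sq

lemma ζ_three : ζ 3 = -1 := by
  rw [← two_add_one_eq_three, ζ_add, ζ_one, ζ_two]
  linear_combination ω_sq

lemma ζ_four : ζ 4 = -1 - ω := by
  rw [← three_add_one_eq_four, ζ_add, ζ_one, ζ_three]
  ring

lemma ζ_five : ζ 5 = -ω := by
  rw [show (5 : ZMod 6) = 3 + 2 from rfl, ζ_add, ζ_two, ζ_three, neg_one_mul]

lemma ζ_ne_zero (i : ZMod 6) : ζ i ≠ 0 := (ζ.val_isUnit i).ne_zero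

lemma ζ_mem_eisRing (i : ZMod 6) : ζ i ∈ eisRing :=
  pow_mem (add_mem (one_mem _) ω_mem_eisRing) _

lemma eq_add_cases (i j : ZMod 6) :
    j = i ∨ j = i + 1 ∨ j = i + 2 ∨ j = i + 3 ∨ j = i + 4 ∨ j = i + 5 := by
  revert i j
  decide

lemma mem_eD_iff {d : ℂ} : d ∈ eD ↔ d = 0 ∨ ∃ i, d = ζ i := by
  have hneg : -(-1 - ω) = 1 + ω := by ring
  simp only [eD, Set.mem_insert_iff, Set.mem_singleton_iff, ω_sq, hneg]
  refine or_congr_right ⟨?_, ?_⟩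
  · rintro (h | h | h | h | h | h)
    · exact ⟨0, h.trans ζ_zero.symm⟩
    · exact ⟨3, h.trans ζ_three.symm⟩
    · exact ⟨2, h.trans ζ_two.symm⟩
    · exact ⟨5, h.trans ζ_five.symm⟩
    · exact ⟨4, h.trans ζ_four.symm⟩
    · exact ⟨1, h.trans ζ_one.symm⟩
  · rintro ⟨i, rfl⟩
    rcases eq_add_cases 0 i with rfl | rfl | rfl | rfl | rfl | rfl <;>
      simp [ζ_one, ζ_two, ζ_three, ζ_four, ζ_five]

lemma ζ_ne_eβ_mul (i : ZMod 6) {t : ℂ} (ht : t ∈ eisRing) : ζ i ≠ eβ * t := by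
  intro h
  refine one_ne_eβ_mul (mul_mem (ζ_mem_eisRing (-i)) ht) ?_
  rw [mul_left_comm, ← h, ← ζ_add, neg_add_cancel, ζ_zero]

section SumOfTwoUnits

variable (i : ZMod 6)

lemma ζ_add_self : ζ i + ζ i = ζ (i + 5) + eβ * ζ (i + 4) := by
  simp only [ζ_add, ζ_five, ζ_four, eβ]
  linear_combination ζ i * ω_sq

lemma ζ_add_ζ_add_one : ζ i + ζ (i + 1) = eβ * ζ (i + 4) := by
  simp only [ζ_add, ζ_one, ζ_four, eβ]
  linear_combination ζ i * ω_sq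

lemma ζ_add_ζ_add_two : ζ i + ζ (i + 2) = ζ (i + 1) := by
  simp only [ζ_add, ζ_one, ζ_two]
  ring

lemma ζ_add_ζ_add_three : ζ i + ζ (i + 3) = 0 := by
  simp only [ζ_add, ζ_three]
  ring

lemma ζ_add_ζ_add_four : ζ i + ζ (i + 4) = ζ (i + 5) := by
  simp only [ζ_add, ζ_four, ζ_five]
  ring

lemma ζ_add_ζ_add_five : ζ i + ζ (i + 5) = eβ * ζ (i + 3) := by
  simp only [ζ_add, ζ_three, ζ_five, eβ]
  ring

end SumOfTwoUnits

lemma ζ_eq_ζ_add_two (i : ZMod 6) : ζ i = ζ (i + 2) + eβ * ζ (i + 3) := by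
  simp only [ζ_add, ζ_two, ζ_three, eβ]
  ring

lemma ζ_eq_ζ_add_four (i : ZMod 6) : ζ i = ζ (i + 4) + eβ * ζ (i + 4) := by
  simp only [ζ_add, ζ_four, eβ]
  linear_combination ζ i * ω_sq

lemma ζ_add_eβ_mul_eq_cases {i j : ZMod 6} {x y : ℂ} (hx : x ∈ eisRing) (hy : y ∈ eisRing)
    (h : ζ i + eβ * x = ζ j + eβ * y) :
    (j = i ∧ y = x) ∨ (j = i + 2 ∧ y = x + ζ (i + 3)) ∨ (j = i + 4 ∧ y = x + ζ (i + 4)) := by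
  have hyx : y - x ∈ eisRing := sub_mem hy hx
  rcases eq_add_cases i j with rfl | rfl | rfl | rfl | rfl | rfl
  · exact Or.inl ⟨rfl, mul_left_cancel₀ eβ_ne_zero (by linear_combination -h)⟩
  · refine absurd ?_ (ζ_ne_eβ_mul (i + 5) hyx)
    simp only [ζ_add, ζ_one, ζ_five] at h ⊢
    linear_combination h
  · refine Or.inr (Or.inl ⟨rfl, mul_left_cancel₀ eβ_ne_zero ?_⟩)
    linear_combination -h + ζ_eq_ζ_add_two i
  · refine absurd ?_ (ζ_ne_eβ_mul (i + 5) (sub_mem hyx (ζ_mem_eisRing (i + 4))))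
    linear_combination h - ζ_add_self i + ζ_add_ζ_add_three i
  · refine Or.inr (Or.inr ⟨rfl, mul_left_cancel₀ eβ_ne_zero ?_⟩)
    linear_combination -h + ζ_eq_ζ_add_four i
  · refine absurd ?_ (ζ_ne_eβ_mul (i + 1) hyx)
    simp only [ζ_add, ζ_one, ζ_five] at h ⊢
    linear_combination h

/-- The element whose 2-NAF is that of `z` with the block consisting of the digit `ζ i` and the
zero forced above it inserted at the low end. -/
def block (i : ZMod 6) (z : ℂ) : ℂ := ζ i + eβ * (eβ * z)

lemma block_mem_eisRing (i : ZMod 6) {z : ℂ} (hz : z ∈ eisRing) : block i z ∈ eisRing :=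
  add_mem (ζ_mem_eisRing i) (eβ_mul_mem_eisRing (eβ_mul_mem_eisRing hz))

lemma block_ne_eβ_mul (i : ZMod 6) {z t : ℂ} (hz : z ∈ eisRing) (ht : t ∈ eisRing) :
    block i z ≠ eβ * t := by
  intro h
  refine ζ_ne_eβ_mul i (sub_mem ht (eβ_mul_mem_eisRing hz)) ?_
  rw [block] at h
  linear_combination h

lemma block_inj {i j : ZMod 6} {x y : ℂ} (hx : x ∈ eisRing) (hy : y ∈ eisRing)
    (h : block i x = block j y) : i = j ∧ x = y := by
  have hyx : y - x ∈ eisRing := sub_mem hy hx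
  rcases ζ_add_eβ_mul_eq_cases (eβ_mul_mem_eisRing hx) (eβ_mul_mem_eisRing hy) h with
    ⟨rfl, hxy⟩ | ⟨-, hxy⟩ | ⟨-, hxy⟩
  · exact ⟨rfl, (mul_left_cancel₀ eβ_ne_zero hxy).symm⟩
  · exact absurd (by linear_combination -hxy) (ζ_ne_eβ_mul (i + 3) hyx)
  · exact absurd (by linear_combination -hxy) (ζ_ne_eβ_mul (i + 4) hyx)

lemma ζ_injective : Function.Injective ζ := fun _ _ h ↦
  (block_inj (zero_mem _) (zero_mem _) (congrArg (· + eβ * (eβ * 0)) h)).1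

/-! ### Representations and their weights -/

lemma eweight_zero_cons (l : List ℂ) : eweight (0 :: l) = eweight l := by
  simp [eweight]

lemma eweight_ζ_cons (i : ZMod 6) (l : List ℂ) : eweight (ζ i :: l) = eweight l + 1 := by
  simp [eweight, ζ_ne_zero]

lemma eNormalized_ζ_cons (i : ZMod 6) (l : List ℂ) :
    eNormalized (ζ i :: l) ↔ eNormalized l := by
  cases l <;> simp [eNormalized, ζ_ne_zero]

lemma eNormalized_zero_cons {l : List ℂ} (hl : l ≠ []) :
    eNormalized (0 :: l) ↔ eNormalized l := by
  cases l <;> simp_all [eNormalized]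

lemma eIsRep_nil {x : ℂ} : eIsRep x [] ↔ x = 0 := by
  simp [eIsRep, evalE, eq_comm]

lemma eIsRep_cons {x d : ℂ} {l : List ℂ} :
    eIsRep x (d :: l) ↔ d ∈ eD ∧ ∃ y, eIsRep y l ∧ x = d + eβ * y := by
  simp only [eIsRep, List.forall_mem_cons]
  constructor
  · rintro ⟨⟨hd, hl⟩, rfl⟩
    exact ⟨hd, evalE l, ⟨hl, rfl⟩, rfl⟩
  · rintro ⟨hd, _, ⟨hl, rfl⟩, rfl⟩
    exact ⟨⟨hd, hl⟩, rfl⟩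

lemma eIsRep_zero_cons {x : ℂ} {l : List ℂ} (h : eIsRep x l) : eIsRep (eβ * x) (0 :: l) :=
  eIsRep_cons.2 ⟨mem_eD_iff.2 (Or.inl rfl), x, h, (zero_add _).symm⟩

lemma eIsRep_ζ_cons (i : ZMod 6) {x : ℂ} {l : List ℂ} (h : eIsRep x l) :
    eIsRep (ζ i + eβ * x) (ζ i :: l) :=
  eIsRep_cons.2 ⟨mem_eD_iff.2 (Or.inr ⟨i, rfl⟩), x, h, rfl⟩

lemma mem_eisRing_of_eIsRep {x : ℂ} {l : List ℂ} (h : eIsRep x l) : x ∈ eisRing := by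
  induction l generalizing x with
  | nil => exact eIsRep_nil.1 h ▸ zero_mem _
  | cons d l ih =>
    obtain ⟨hd, y, hy, rfl⟩ := eIsRep_cons.1 h
    refine add_mem ?_ (eβ_mul_mem_eisRing (ih hy))
    rcases mem_eD_iff.1 hd with rfl | ⟨i, rfl⟩
    · exact zero_mem _
    · exact ζ_mem_eisRing i

lemma eIsRep_eβ_mul_iff {x : ℂ} (hx : x ∈ eisRing) {l : List ℂ} :
    eIsRep (eβ * x) l ↔ (l = [] ∧ x = 0) ∨ ∃ l', l = 0 :: l' ∧ eIsRep x l' := by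
  constructor
  · intro h
    cases l with
    | nil => exact Or.inl ⟨rfl, (mul_eq_zero.1 (eIsRep_nil.1 h)).resolve_left eβ_ne_zero⟩
    | cons d l =>
      obtain ⟨hd, y, hy, hxy⟩ := eIsRep_cons.1 h
      rcases mem_eD_iff.1 hd with rfl | ⟨j, rfl⟩
      · rw [zero_add] at hxy
        exact Or.inr ⟨l, rfl, mul_left_cancel₀ eβ_ne_zero hxy ▸ hy⟩
      · exact absurd (by linear_combination -hxy)
          (ζ_ne_eβ_mul j (sub_mem hx (mem_eisRing_of_eIsRep hy)))
  · rintro (⟨rfl, rfl⟩ | ⟨l, rfl, h⟩)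
    · exact eIsRep_nil.2 (mul_zero _)
    · exact eIsRep_zero_cons h

lemma eIsRep_ζ_add_eβ_mul_iff {i : ZMod 6} {x : ℂ} (hx : x ∈ eisRing) {l : List ℂ} :
    eIsRep (ζ i + eβ * x) l ↔ ∃ l', (l = ζ i :: l' ∧ eIsRep x l') ∨
      (l = ζ (i + 2) :: l' ∧ eIsRep (x + ζ (i + 3)) l') ∨
      (l = ζ (i + 4) :: l' ∧ eIsRep (x + ζ (i + 4)) l') := by
  constructor
  · intro h
    cases l with
    | nil =>
      exact absurd (by linear_combination eIsRep_nil.1 h) (ζ_ne_eβ_mul i (neg_mem hx))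
    | cons d l =>
      obtain ⟨hd, y, hy, hxy⟩ := eIsRep_cons.1 h
      have hy' : y ∈ eisRing := mem_eisRing_of_eIsRep hy
      rcases mem_eD_iff.1 hd with rfl | ⟨j, rfl⟩
      · exact absurd (by linear_combination hxy) (ζ_ne_eβ_mul i (sub_mem hy' hx))
      · rcases ζ_add_eβ_mul_eq_cases hx hy' hxy with ⟨rfl, rfl⟩ | ⟨rfl, rfl⟩ | ⟨rfl, rfl⟩
        · exact ⟨l, Or.inl ⟨rfl, hy⟩⟩
        · exact ⟨l, Or.inr (Or.inl ⟨rfl, hy⟩)⟩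
        · exact ⟨l, Or.inr (Or.inr ⟨rfl, hy⟩)⟩
  · rintro ⟨l, ⟨rfl, h⟩ | ⟨rfl, h⟩ | ⟨rfl, h⟩⟩
    · exact eIsRep_ζ_cons i h
    · convert eIsRep_ζ_cons (i + 2) h using 1
      linear_combination ζ_eq_ζ_add_two i
    · convert eIsRep_ζ_cons (i + 4) h using 1
      linear_combination ζ_eq_ζ_add_four i

lemma exists_eIsRep_add_ζ {x : ℂ} {l : List ℂ} (h : eIsRep x l) (j : ZMod 6) :
    ∃ l', eIsRep (x + ζ j) l' ∧ eweight l' ≤ eweight l + 1 := by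
  induction l generalizing x j with
  | nil =>
    refine ⟨[ζ j], ?_, (eweight_ζ_cons j []).le⟩
    simpa [eIsRep_nil.1 h] using eIsRep_ζ_cons j (eIsRep_nil.2 rfl)
  | cons d l ih =>
    obtain ⟨hd, y, hy, rfl⟩ := eIsRep_cons.1 h
    rcases mem_eD_iff.1 hd with rfl | ⟨i, rfl⟩
    · refine ⟨ζ j :: l, ?_, by rw [eweight_ζ_cons, eweight_zero_cons]⟩
      rw [zero_add, add_comm]
      exact eIsRep_ζ_cons j hy
    rw [eweight_ζ_cons, add_right_comm]
    rcases eq_add_cases i j with rfl | rfl | rfl | rfl | rfl | rfl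
    · obtain ⟨l', hl', hw⟩ := ih hy (j + 4)
      refine ⟨ζ (j + 5) :: l', ?_, by rw [eweight_ζ_cons]; omega⟩
      rw [ζ_add_self, add_assoc, ← mul_add, add_comm (ζ (j + 4))]
      exact eIsRep_ζ_cons _ hl'
    · obtain ⟨l', hl', hw⟩ := ih hy (i + 4)
      refine ⟨0 :: l', ?_, by rw [eweight_zero_cons]; omega⟩
      rw [ζ_add_ζ_add_one, ← mul_add, add_comm (ζ (i + 4))]
      exact eIsRep_zero_cons hl'
    · refine ⟨ζ (i + 1) :: l, ?_, by rw [eweight_ζ_cons]; omega⟩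
      rw [ζ_add_ζ_add_two]
      exact eIsRep_ζ_cons _ hy
    · refine ⟨0 :: l, ?_, by rw [eweight_zero_cons]; omega⟩
      rw [ζ_add_ζ_add_three, zero_add]
      exact eIsRep_zero_cons hy
    · refine ⟨ζ (i + 5) :: l, ?_, by rw [eweight_ζ_cons]; omega⟩
      rw [ζ_add_ζ_add_four]
      exact eIsRep_ζ_cons _ hy
    · obtain ⟨l', hl', hw⟩ := ih hy (i + 3)
      refine ⟨0 :: l', ?_, by rw [eweight_zero_cons]; omega⟩
      rw [ζ_add_ζ_add_five, ← mul_add, add_comm (ζ (i + 3))]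
      exact eIsRep_zero_cons hl'

/-- Every representation of `x` has at least `n` nonzero digits. -/
def WeightAtLeast (x : ℂ) (n : ℕ) : Prop := ∀ l, eIsRep x l → n ≤ eweight l

namespace WeightAtLeast

variable {x : ℂ} {n : ℕ}

lemma zero (x : ℂ) : WeightAtLeast x 0 := fun _ _ ↦ Nat.zero_le _

lemma add_ζ (h : WeightAtLeast x (n + 1)) (j : ZMod 6) : WeightAtLeast (x + ζ j) n := by
  intro l hl
  obtain ⟨l', hl', hw⟩ := exists_eIsRep_add_ζ hl (j + 3)
  rw [add_assoc, ζ_add_ζ_add_three, add_zero] at hl'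
  have := h l' hl'
  omega

lemma eβ_mul (hx : x ∈ eisRing) (h : WeightAtLeast x n) : WeightAtLeast (eβ * x) n := by
  intro l hl
  rcases (eIsRep_eβ_mul_iff hx).1 hl with ⟨rfl, rfl⟩ | ⟨l', rfl, hl'⟩
  · exact h [] (eIsRep_nil.2 rfl)
  · rw [eweight_zero_cons]
    exact h l' hl'

lemma ζ_add_eβ_mul (hx : x ∈ eisRing) (h : WeightAtLeast x n) (i : ZMod 6) :
    WeightAtLeast (ζ i + eβ * x) n := by
  cases n with
  | zero => exact zero _
  | succ n =>
    intro l hl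
    obtain ⟨l', ⟨rfl, hl'⟩ | ⟨rfl, hl'⟩ | ⟨rfl, hl'⟩⟩ := (eIsRep_ζ_add_eβ_mul_iff hx).1 hl <;>
      rw [eweight_ζ_cons]
    · exact (h l' hl').trans (Nat.le_succ _)
    · exact Nat.succ_le_succ (h.add_ζ _ l' hl')
    · exact Nat.succ_le_succ (h.add_ζ _ l' hl')

lemma block (hx : x ∈ eisRing) (h : WeightAtLeast x n) (i : ZMod 6) :
    WeightAtLeast (block i x) (n + 1) := by
  intro l hl
  obtain ⟨l', ⟨rfl, hl'⟩ | ⟨rfl, hl'⟩ | ⟨rfl, hl'⟩⟩ :=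
      (eIsRep_ζ_add_eβ_mul_iff (eβ_mul_mem_eisRing hx)).1 hl <;>
    rw [eweight_ζ_cons] <;> refine Nat.succ_le_succ ?_
  · exact h.eβ_mul hx l' hl'
  · exact h.ζ_add_eβ_mul hx _ l' (by rwa [add_comm])
  · exact h.ζ_add_eβ_mul hx _ l' (by rwa [add_comm])

end WeightAtLeast

/-! ### Counting representations of given weight -/

/-- The normalized representations of `x` with exactly `k` nonzero digits. The integer `k` may be
negative, so that the weight can be lowered by one without a case distinction. -/
def reps (x : ℂ) (k : ℤ) : Set (List ℂ) := {l | eIsRep x l ∧ eNormalized l ∧ eweight l = k}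

lemma reps_eq_empty {x : ℂ} {n : ℕ} (h : WeightAtLeast x n) {k : ℤ} (hk : k < n) :
    reps x k = ∅ := by
  refine Set.eq_empty_of_forall_notMem ?_
  rintro l ⟨hl, -, hw⟩
  have := h l hl
  omega

lemma eq_zero_of_mem_of_eIsRep_zero {l : List ℂ} (hl : eIsRep 0 l) {d : ℂ} (hd : d ∈ l) :
    d = 0 := by
  induction l with
  | nil => simp at hd
  | cons e l ih =>
    rw [← mul_zero eβ, eIsRep_eβ_mul_iff (zero_mem _)] at hl
    obtain ⟨⟨⟩, -⟩ | ⟨l, ⟨⟩, hl⟩ := hl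
    exact (List.mem_cons.1 hd).elim id (ih hl)

lemma reps_zero_subset (k : ℤ) : reps 0 k ⊆ {[]} := by
  rintro l ⟨hl, hn, -⟩
  cases hlast : l.getLast? with
  | none => simpa using hlast
  | some d =>
    obtain rfl := eq_zero_of_mem_of_eIsRep_zero hl (List.mem_of_getLast? hlast)
    exact absurd hlast hn

lemma reps_eβ_mul {x : ℂ} (hx : x ∈ eisRing) (hx0 : x ≠ 0) (k : ℤ) :
    reps (eβ * x) k = List.cons 0 '' reps x k := by
  have hne {l : List ℂ} (hl : eIsRep x l) : l ≠ [] := fun h ↦ hx0 (eIsRep_nil.1 (h ▸ hl))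
  ext l
  constructor
  · rintro ⟨hl, hn, hw⟩
    rcases (eIsRep_eβ_mul_iff hx).1 hl with ⟨-, h⟩ | ⟨l', rfl, hl'⟩
    · exact absurd h hx0
    · rw [eweight_zero_cons] at hw
      exact ⟨l', ⟨hl', (eNormalized_zero_cons (hne hl')).1 hn, hw⟩, rfl⟩
  · rintro ⟨l, ⟨hl, hn, hw⟩, rfl⟩
    exact ⟨eIsRep_zero_cons hl, (eNormalized_zero_cons (hne hl)).2 hn, by rwa [eweight_zero_cons]⟩

lemma reps_ζ_add_eβ_mul {x : ℂ} (hx : x ∈ eisRing) (i : ZMod 6) (k : ℤ) :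
    reps (ζ i + eβ * x) k = List.cons (ζ i) '' reps x (k - 1) ∪
      (List.cons (ζ (i + 2)) '' reps (x + ζ (i + 3)) (k - 1) ∪
        List.cons (ζ (i + 4)) '' reps (x + ζ (i + 4)) (k - 1)) := by
  have mem_cons (j : ZMod 6) (l : List ℂ) :
      (eNormalized (ζ j :: l) ∧ (eweight (ζ j :: l) : ℤ) = k) ↔
        eNormalized l ∧ (eweight l : ℤ) = k - 1 := by
    rw [eNormalized_ζ_cons, eweight_ζ_cons, Nat.cast_succ, eq_sub_iff_add_eq]
  ext l
  simp only [reps, Set.mem_union, Set.mem_image, Set.mem_ofPred_eq, eIsRep_ζ_add_eβ_mul_iff hx]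
  constructor
  · rintro ⟨⟨l, ⟨rfl, hl⟩ | ⟨rfl, hl⟩ | ⟨rfl, hl⟩⟩, hnw⟩ <;> rw [mem_cons] at hnw
    · exact Or.inl ⟨l, ⟨hl, hnw⟩, rfl⟩
    · exact Or.inr (Or.inl ⟨l, ⟨hl, hnw⟩, rfl⟩)
    · exact Or.inr (Or.inr ⟨l, ⟨hl, hnw⟩, rfl⟩)
  · rintro (⟨l, ⟨hl, hnw⟩, rfl⟩ | ⟨l, ⟨hl, hnw⟩, rfl⟩ | ⟨l, ⟨hl, hnw⟩, rfl⟩) <;>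
      rw [mem_cons]
    · exact ⟨⟨l, Or.inl ⟨rfl, hl⟩⟩, hnw⟩
    · exact ⟨⟨l, Or.inr (Or.inl ⟨rfl, hl⟩)⟩, hnw⟩
    · exact ⟨⟨l, Or.inr (Or.inr ⟨rfl, hl⟩)⟩, hnw⟩

lemma finite_reps (x : ℂ) (k : ℤ) : (reps x k).Finite := by
  suffices h : ∀ n : ℕ, ∀ k < (n : ℤ), ∀ x, (reps x k).Finite from
    h (k.toNat + 1) k (by omega) x
  intro n
  induction n with
  | zero => exact fun k hk x ↦ reps_eq_empty (.zero x) hk ▸ Set.finite_empty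
  | succ n ihn =>
    intro k hk x
    rcases (reps x k).eq_empty_or_nonempty with he | ⟨l, hl, -⟩
    · exact he ▸ Set.finite_empty
    -- Recurse along one fixed representation of `x` as long as its digits vanish.
    induction l generalizing x with
    | nil => exact (Set.finite_singleton []).subset (eIsRep_nil.1 hl ▸ reps_zero_subset k)
    | cons d l ihl =>
      obtain ⟨hd, y, hy, rfl⟩ := eIsRep_cons.1 hl
      have hyE : y ∈ eisRing := mem_eisRing_of_eIsRep hy
      rcases mem_eD_iff.1 hd with rfl | ⟨i, rfl⟩
      · rw [zero_add]
        rcases eq_or_ne y 0 with rfl | hy0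
        · exact (mul_zero eβ).symm ▸ ihl 0 hy
        · exact reps_eβ_mul hyE hy0 k ▸ (ihl y hy).image _
      · have hfin (z : ℂ) : (reps z (k - 1)).Finite := ihn (k - 1) (by omega) z
        rw [reps_ζ_add_eβ_mul hyE]
        exact ((hfin _).image _).union (((hfin _).image _).union ((hfin _).image _))

/-- The number of normalized representations of `x` with exactly `k` nonzero digits. -/
def repCount (x : ℂ) (k : ℤ) : ℕ := (reps x k).ncard

lemma repCount_eq_zero {x : ℂ} {n : ℕ} (h : WeightAtLeast x n) {k : ℤ} (hk : k < n) :
    repCount x k = 0 := by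
  rw [repCount, reps_eq_empty h hk, Set.ncard_empty]

lemma repCount_eβ_mul {x : ℂ} (hx : x ∈ eisRing) (k : ℤ) :
    repCount (eβ * x) k = repCount x k := by
  rcases eq_or_ne x 0 with rfl | hx0
  · rw [mul_zero]
  · rw [repCount, reps_eβ_mul hx hx0, Set.ncard_image_of_injective _ List.cons_injective, repCount]

lemma disjoint_cons_image {α : Type*} {d e : α} (hde : d ≠ e) (s t : Set (List α)) :
    Disjoint (List.cons d '' s) (List.cons e '' t) := by
  rw [Set.disjoint_left]
  rintro _ ⟨l, -, rfl⟩ ⟨l', -, h⟩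
  exact hde (List.cons_eq_cons.1 h).1.symm

lemma repCount_ζ_add_eβ_mul {x : ℂ} (hx : x ∈ eisRing) (i : ZMod 6) (k : ℤ) :
    repCount (ζ i + eβ * x) k = repCount x (k - 1) + repCount (x + ζ (i + 3)) (k - 1) +
      repCount (x + ζ (i + 4)) (k - 1) := by
  have hfin (d : ℂ) (y : ℂ) : (List.cons d '' reps y (k - 1)).Finite := (finite_reps y _).image _
  have h02 : ζ i ≠ ζ (i + 2) := ζ_injective.ne (left_ne_add.2 (by decide))
  have h04 : ζ i ≠ ζ (i + 4) := ζ_injective.ne (left_ne_add.2 (by decide))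
  have h24 : ζ (i + 2) ≠ ζ (i + 4) := ζ_injective.ne ((add_right_injective i).ne (by decide))
  rw [repCount, reps_ζ_add_eβ_mul hx,
    Set.ncard_union_eq
      (Set.disjoint_union_right.2
        ⟨disjoint_cons_image h02 _ _, disjoint_cons_image h04 _ _⟩)
      (hfin _ _) ((hfin _ _).union (hfin _ _)),
    Set.ncard_union_eq (disjoint_cons_image h24 _ _) (hfin _ _) (hfin _ _)]
  simp only [Set.ncard_image_of_injective _ List.cons_injective, repCount, add_assoc]

/-- The number of normalized representations of the neighbour `z + ζ j` of `z` with `n - 1`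
nonzero digits. If `z` has minimal weight `n`, this is the least weight a neighbour can have. -/
def nearCount (z : ℂ) (n : ℕ) (j : ZMod 6) : ℕ := repCount (z + ζ j) (n - 1)

lemma nearCount_succ (z : ℂ) (n : ℕ) (j : ZMod 6) :
    nearCount z (n + 1) j = repCount (z + ζ j) n := by
  rw [nearCount, Nat.cast_succ, add_sub_cancel_right]

section CountRecursion

variable {z : ℂ} {n : ℕ}

lemma repCount_ζ_add_eβ_mul_eq_nearCount (hz : z ∈ eisRing) (h : WeightAtLeast z n)
    (m : ZMod 6) :
    repCount (ζ m + eβ * z) n = nearCount z n (m + 3) + nearCount z n (m + 4) := by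
  rw [repCount_ζ_add_eβ_mul hz, repCount_eq_zero h (by omega), zero_add]
  rfl

lemma nearCount_eβ_mul (hz : z ∈ eisRing) (h : WeightAtLeast z n) (j : ZMod 6) :
    nearCount (eβ * z) n j = 0 := by
  rw [nearCount, add_comm]
  exact repCount_eq_zero (h.ζ_add_eβ_mul hz j) (by omega)

lemma repCount_block (hz : z ∈ eisRing) (h : WeightAtLeast z n) (i : ZMod 6) :
    repCount (block i z) (n + 1 : ℕ) = repCount z n + nearCount z n i +
      2 * nearCount z n (i + 1) + nearCount z n (i + 2) := by
  rw [block, repCount_ζ_add_eβ_mul (eβ_mul_mem_eisRing hz), Nat.cast_succ, add_sub_cancel_right,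
    repCount_eβ_mul hz, add_comm (eβ * z), add_comm (eβ * z),
    repCount_ζ_add_eβ_mul_eq_nearCount hz h,
    repCount_ζ_add_eβ_mul_eq_nearCount hz h]
  simp only [add_assoc]
  reduce_mod_char
  ring

lemma nearCount_block_self (hz : z ∈ eisRing) (h : WeightAtLeast z n) (i : ZMod 6) :
    nearCount (block i z) (n + 1) i = nearCount z n (i + 1) := by
  have hsum : block i z + ζ i = ζ (i + 5) + eβ * (ζ (i + 4) + eβ * z) := by
    rw [block]
    linear_combination ζ_add_self i
  have h9 : ζ (i + 4) + eβ * z + ζ (i + 5 + 4) = eβ * (z + ζ (i + 1)) := by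
    have := ζ_add_ζ_add_one (i + 3)
    simp only [add_assoc] at this ⊢
    reduce_mod_char at this ⊢
    linear_combination this
  have h8 : ζ (i + 4) + eβ * z + ζ (i + 5 + 3) = ζ (i + 3) + eβ * z := by
    have := ζ_add_ζ_add_two (i + 2)
    simp only [add_assoc] at this ⊢
    reduce_mod_char at this ⊢
    linear_combination this
  have hlow (m : ZMod 6) : repCount (ζ m + eβ * z) (n - 1) = 0 :=
    repCount_eq_zero (h.ζ_add_eβ_mul hz m) (by omega)
  rw [nearCount_succ, hsum,
    repCount_ζ_add_eβ_mul (add_mem (ζ_mem_eisRing _) (eβ_mul_mem_eisRing hz)), h8, h9, hlow, hlow,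
    repCount_eβ_mul (add_mem hz (ζ_mem_eisRing _)), zero_add, zero_add]
  rfl

lemma nearCount_block_add_one (hz : z ∈ eisRing) (h : WeightAtLeast z n) (i : ZMod 6) :
    nearCount (block i z) (n + 1) (i + 1) = nearCount z n (i + 1) + nearCount z n (i + 2) := by
  have hsum : block i z + ζ (i + 1) = eβ * (ζ (i + 4) + eβ * z) := by
    rw [block]
    linear_combination ζ_add_ζ_add_one i
  rw [nearCount_succ, hsum,
    repCount_eβ_mul (add_mem (ζ_mem_eisRing _) (eβ_mul_mem_eisRing hz)),
    repCount_ζ_add_eβ_mul_eq_nearCount hz h]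
  simp only [add_assoc]
  reduce_mod_char

lemma nearCount_block_add_two (hz : z ∈ eisRing) (h : WeightAtLeast z n) (i : ZMod 6) :
    nearCount (block i z) (n + 1) (i + 2) = 0 := by
  have hsum : block i z + ζ (i + 2) = block (i + 1) z := by
    rw [block, block]
    linear_combination ζ_add_ζ_add_two i
  rw [nearCount_succ, hsum]
  exact repCount_eq_zero (h.block hz _) (by omega)

lemma nearCount_block_add_three (hz : z ∈ eisRing) (i : ZMod 6) :
    nearCount (block i z) (n + 1) (i + 3) = repCount z n := by
  have hsum : block i z + ζ (i + 3) = eβ * (eβ * z) := by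
    rw [block]
    linear_combination ζ_add_ζ_add_three i
  rw [nearCount_succ, hsum, repCount_eβ_mul (eβ_mul_mem_eisRing hz), repCount_eβ_mul hz]

lemma nearCount_block_add_four (hz : z ∈ eisRing) (h : WeightAtLeast z n) (i : ZMod 6) :
    nearCount (block i z) (n + 1) (i + 4) = 0 := by
  have hsum : block i z + ζ (i + 4) = block (i + 5) z := by
    rw [block, block]
    linear_combination ζ_add_ζ_add_four i
  rw [nearCount_succ, hsum]
  exact repCount_eq_zero (h.block hz _) (by omega)

lemma nearCount_block_add_five (hz : z ∈ eisRing) (h : WeightAtLeast z n) (i : ZMod 6) :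
    nearCount (block i z) (n + 1) (i + 5) = nearCount z n i + nearCount z n (i + 1) := by
  have hsum : block i z + ζ (i + 5) = eβ * (ζ (i + 3) + eβ * z) := by
    rw [block]
    linear_combination ζ_add_ζ_add_five i
  rw [nearCount_succ, hsum,
    repCount_eβ_mul (add_mem (ζ_mem_eisRing _) (eβ_mul_mem_eisRing hz)),
    repCount_ζ_add_eβ_mul_eq_nearCount hz h]
  simp only [add_assoc]
  reduce_mod_char

end CountRecursion

/-! ### The sequence `s_n` -/

/-- Half of the increment `s_{n+1} - s_n`. It is the largest possible sum of two cyclically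
consecutive values of `nearCount z n`. -/
def nearBound (n : ℕ) : ℕ := (3 * 2 ^ n + 2) / 7

lemma two_pow_mod_seven (n : ℕ) :
    (n % 3 = 0 ∧ 2 ^ n % 7 = 1) ∨ (n % 3 = 1 ∧ 2 ^ n % 7 = 2) ∨ (n % 3 = 2 ∧ 2 ^ n % 7 = 4) := by
  induction n with
  | zero => decide
  | succ n ih => omega

lemma sseq_succ (n : ℕ) : sseq (n + 1) = sseq n + 2 * nearBound n := by
  have := two_pow_mod_seven n
  simp only [sseq, nearBound, pow_succ]
  omega

lemma nearBound_succ_cases (n : ℕ) :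
    (n % 3 = 0 ∧ nearBound (n + 1) = 2 * nearBound n + 1 ∧ sseq n = 2 * nearBound n + 1) ∨
      (n % 3 = 1 ∧ nearBound (n + 1) = 2 * nearBound n ∧ sseq n + 1 = 2 * nearBound n) ∨
      (n % 3 = 2 ∧ nearBound (n + 1) + 1 = 2 * nearBound n ∧ sseq n + 1 = 2 * nearBound n) := by
  have := two_pow_mod_seven n
  simp only [sseq, nearBound, pow_succ]
  omega

lemma nearBound_strictMono : StrictMono nearBound := by
  refine strictMono_nat_of_lt_succ fun n ↦ ?_
  have := two_pow_mod_seven n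
  have : 0 < 2 ^ n := by positivity
  simp only [nearBound, pow_succ]
  omega

lemma nearBound_eq_two_iff {n : ℕ} : nearBound n = 2 ↔ n = 2 :=
  nearBound_strictMono.injective.eq_iff (b := 2)

lemma sseq_le_nearBound_succ (n : ℕ) : sseq n ≤ nearBound (n + 1) := by
  have := nearBound_succ_cases n
  omega

lemma two_mul_sseq_le_nearBound (n : ℕ) : 2 * sseq n ≤ nearBound (n + 1 + 1) := by
  have := nearBound_succ_cases n
  have := nearBound_succ_cases (n + 1)
  omega

lemma nearBound_add_nearBound_succ_le (n : ℕ) :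
    nearBound n + nearBound (n + 1) ≤ nearBound (n + 1 + 1) := by
  have := nearBound_succ_cases n
  have := nearBound_succ_cases (n + 1)
  have := nearBound_strictMono (Nat.lt_add_one n)
  omega

/-! ### Non-adjacent forms -/

/-- `IsNaf x n` says that `x` has a 2-NAF with `n` nonzero digits, built from the leading end by
appending zeros and blocks. -/
inductive IsNaf : ℂ → ℕ → Prop
  | zero : IsNaf 0 0
  | shift {x : ℂ} {n : ℕ} (h : IsNaf x n) : IsNaf (eβ * x) n
  | block (i : ZMod 6) {z : ℂ} {n : ℕ} (h : IsNaf z n) : IsNaf (block i z) (n + 1)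

lemma eNAF_two_cons {d : ℂ} {l : List ℂ} :
    eNAF 2 (d :: l) ↔ (d ≠ 0 → l.getD 0 0 = 0) ∧ eNAF 2 l := by
  constructor
  · intro h
    exact ⟨h 0 1 one_pos one_lt_two,
      fun j k hjk hk ↦ h (j + 1) (k + 1) (Nat.succ_lt_succ hjk) (by omega)⟩
  · rintro ⟨hd, hl⟩ (_ | j) (_ | k) hjk hk
    · omega
    · obtain rfl : k = 0 := by omega
      exact hd
    · omega
    · exact hl j k (by omega) (by omega)

lemma isNaf_eweight {x : ℂ} {l : List ℂ} (hl : eIsRep x l) (hnaf : eNAF 2 l) :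
    IsNaf x (eweight l) := by
  -- A vanishing lowest digit must be remembered, to complete it to a block.
  suffices h : IsNaf x (eweight l) ∧
      (l.getD 0 0 = 0 → ∃ y, x = eβ * y ∧ IsNaf y (eweight l)) from h.1
  induction l generalizing x with
  | nil =>
    obtain rfl := eIsRep_nil.1 hl
    exact ⟨.zero, fun _ ↦ ⟨0, (mul_zero _).symm, .zero⟩⟩
  | cons d l ih =>
    obtain ⟨hd, y, hy, rfl⟩ := eIsRep_cons.1 hl
    obtain ⟨hdl, hnaf⟩ := eNAF_two_cons.1 hnaf
    obtain ⟨hyn, hshift⟩ := ih hy hnaf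
    rcases mem_eD_iff.1 hd with rfl | ⟨i, rfl⟩
    · rw [eweight_zero_cons, zero_add]
      exact ⟨hyn.shift, fun _ ↦ ⟨y, rfl, hyn⟩⟩
    · obtain ⟨z, rfl, hz⟩ := hshift (hdl (ζ_ne_zero i))
      rw [eweight_ζ_cons]
      exact ⟨hz.block i, fun h ↦ absurd h (ζ_ne_zero i)⟩

namespace IsNaf

variable {x : ℂ} {n : ℕ}

lemma mem_eisRing (h : IsNaf x n) : x ∈ eisRing := by
  induction h with
  | zero => exact zero_mem _
  | shift _ ih => exact eβ_mul_mem_eisRing ih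
  | block i _ ih => exact block_mem_eisRing i ih

lemma weightAtLeast (h : IsNaf x n) : WeightAtLeast x n := by
  induction h with
  | zero => exact .zero _
  | shift h ih => exact ih.eβ_mul h.mem_eisRing
  | block i h ih => exact ih.block h.mem_eisRing i

lemma exists_eIsRep (h : IsNaf x n) : ∃ l, eIsRep x l ∧ eNAF 2 l ∧ eweight l = n := by
  induction h with
  | zero => exact ⟨[], eIsRep_nil.2 rfl, by simp [eNAF], rfl⟩
  | shift _ ih =>
    obtain ⟨l, hl, hnaf, rfl⟩ := ih
    exact ⟨0 :: l, eIsRep_zero_cons hl, eNAF_two_cons.2 ⟨fun h ↦ absurd rfl h, hnaf⟩,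
      eweight_zero_cons l⟩
  | block i _ ih =>
    obtain ⟨l, hl, hnaf, rfl⟩ := ih
    refine ⟨ζ i :: 0 :: l, eIsRep_ζ_cons i (eIsRep_zero_cons hl), ?_, ?_⟩
    · exact eNAF_two_cons.2 ⟨fun _ ↦ rfl, eNAF_two_cons.2 ⟨fun h ↦ absurd rfl h, hnaf⟩⟩
    · rw [eweight_ζ_cons, eweight_zero_cons]

lemma enumOpt_eq (h : IsNaf x n) : enumOpt x = repCount x n := by
  obtain ⟨l₀, hl₀, -, hw₀⟩ := h.exists_eIsRep
  have hset : {l | eOptimal x l} = reps x n := by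
    ext l
    refine ⟨fun ⟨hl, hn, hmin⟩ ↦ ⟨hl, hn, ?_⟩, fun ⟨hl, hn, hw⟩ ↦ ⟨hl, hn, fun l' hl' ↦ ?_⟩⟩
    · exact_mod_cast (hw₀ ▸ hmin l₀ hl₀).antisymm (h.weightAtLeast l hl)
    · exact (Nat.cast_injective hw).trans_le (h.weightAtLeast l' hl')
  rw [repCount, ← hset]
  rfl

lemma eq_zero (h : IsNaf x 0) : x = 0 := by
  generalize hn : 0 = n at h
  induction h with
  | zero => rfl
  | shift _ ih => rw [ih hn, mul_zero]
  | block => omega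

end IsNaf

/-! ### Bounds for the counts and the case of equality -/

lemma repCount_zero_zero : repCount 0 0 = 1 := by
  have hnil : [] ∈ reps 0 0 := ⟨eIsRep_nil.2 rfl, by simp [eNormalized], rfl⟩
  rw [repCount, (reps_zero_subset 0).antisymm (Set.singleton_subset_iff.2 hnil),
    Set.ncard_singleton]

lemma nearCount_weight_zero (z : ℂ) (j : ZMod 6) : nearCount z 0 j = 0 :=
  repCount_eq_zero (.zero _) (by norm_num)

/-- The bounds on the counts at an element `z` of minimal weight `n`. They do not refer to the
digits of `z`, and appending a block to the 2-NAF of `z` preserves them. -/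
structure CountBounds (z : ℂ) (n : ℕ) : Prop where
  repCount_le : repCount z n ≤ sseq n
  add_le (j : ZMod 6) : nearCount z n j + nearCount z n (j + 1) ≤ nearBound n
  add_two_mul_le (j : ZMod 6) :
    nearCount z n j + 2 * nearCount z n (j + 1) ≤ nearBound (n + 1)
  two_mul_add_le (j : ZMod 6) :
    2 * nearCount z n j + nearCount z n (j + 1) ≤ nearBound (n + 1)

lemma CountBounds.block {z : ℂ} {n : ℕ} (hz : z ∈ eisRing) (h : WeightAtLeast z n)
    (hb : CountBounds z n) (i : ZMod 6) : CountBounds (block i z) (n + 1) := by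
  have hs := sseq_succ n
  have hs₁ := sseq_le_nearBound_succ n
  have hs₂ := two_mul_sseq_le_nearBound n
  have ht := nearBound_strictMono (Nat.lt_add_one n)
  have ht₂ := nearBound_add_nearBound_succ_le n
  have hcount := hb.repCount_le
  have hadd₀ := hb.add_le i
  have hadd₁ := hb.add_le (i + 1)
  have htwo₀ := hb.add_two_mul_le i
  have htwo₁ := hb.two_mul_add_le (i + 1)
  have hf := repCount_block hz h i
  have h₀ := nearCount_block_self hz h i
  have h₁ := nearCount_block_add_one hz h i
  have h₂ := nearCount_block_add_two hz h i
  have h₃ := nearCount_block_add_three (n := n) hz i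
  have h₄ := nearCount_block_add_four hz h i
  have h₅ := nearCount_block_add_five hz h i
  simp only [add_assoc, one_add_one_eq_two] at hadd₁ htwo₁
  -- In cyclic order from `i`, the new values are `v, v + w, 0, repCount z n, 0, u + v`, where
  -- `u, v, w` are the values for `z` at `i, i + 1, i + 2`.
  constructor
  · omega
  all_goals
    intro j
    rcases eq_add_cases i j with rfl | rfl | rfl | rfl | rfl | rfl
  all_goals
    try simp only [add_assoc (G := ZMod 6)]
    reduce_mod_char
    omega

lemma IsNaf.countBounds {z : ℂ} {n : ℕ} (h : IsNaf z n) : CountBounds z n := by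
  induction h with
  | zero =>
    constructor <;> simp [repCount_zero_zero, nearCount_weight_zero, sseq]
  | shift h ih =>
    constructor <;> simp [repCount_eβ_mul, nearCount_eβ_mul, h.mem_eisRing, h.weightAtLeast,
      ih.repCount_le]
  | block i h ih => exact ih.block h.mem_eisRing h.weightAtLeast i

lemma repCount_block_eq_sseq_iff {z : ℂ} {n : ℕ} (hz : IsNaf z n) (i : ZMod 6) :
    repCount (block i z) (n + 1 : ℕ) = sseq (n + 1) ↔ repCount z n = sseq n ∧
      nearCount z n i + nearCount z n (i + 1) = nearBound n ∧
      nearCount z n (i + 1) + nearCount z n (i + 2) = nearBound n := by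
  have hcount := hz.countBounds.repCount_le
  have hadd₀ := hz.countBounds.add_le i
  have hadd₁ := hz.countBounds.add_le (i + 1)
  simp only [add_assoc, one_add_one_eq_two] at hadd₁
  rw [repCount_block hz.mem_eisRing hz.weightAtLeast, sseq_succ]
  omega

/-- The shape of the counts at an element `x` with a 2-NAF of weight `n + 1`, lowest digit `ζ i`
and the maximal number of optimal representations. -/
structure IsExtremal (x : ℂ) (n : ℕ) (i : ZMod 6) : Prop where
  repCount_eq : repCount x (n + 1 : ℕ) = sseq (n + 1)
  self_le : nearCount x (n + 1) i ≤ nearBound n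
  self_of_mod_eq_one : n % 3 = 1 → nearCount x (n + 1) i = nearBound n
  self_of_mod_eq_two : n % 3 = 2 → 2 * nearCount x (n + 1) i = nearBound n
  add_one : nearCount x (n + 1) (i + 1) = nearBound n
  add_two : nearCount x (n + 1) (i + 2) = 0
  add_three : nearCount x (n + 1) (i + 3) = sseq n
  add_four : nearCount x (n + 1) (i + 4) = 0
  add_five : nearCount x (n + 1) (i + 5) = nearBound n

lemma isExtremal_block {z : ℂ} {n : ℕ} (hz : IsNaf z n) {i : ZMod 6}
    (h : repCount (block i z) (n + 1 : ℕ) = sseq (n + 1))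
    (h_one : n % 3 = 1 → nearCount z n (i + 1) = nearBound n)
    (h_two : n % 3 = 2 → 2 * nearCount z n (i + 1) = nearBound n) :
    IsExtremal (block i z) n i := by
  obtain ⟨hcount, hadd₀, hadd₁⟩ := (repCount_block_eq_sseq_iff hz i).1 h
  have h₀ := nearCount_block_self hz.mem_eisRing hz.weightAtLeast i
  exact
    { repCount_eq := h
      self_le := by omega
      self_of_mod_eq_one := fun hn ↦ h₀.trans (h_one hn)
      self_of_mod_eq_two := fun hn ↦ h₀ ▸ h_two hn
      add_one := (nearCount_block_add_one hz.mem_eisRing hz.weightAtLeast i).trans hadd₁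
      add_two := nearCount_block_add_two hz.mem_eisRing hz.weightAtLeast i
      add_three := (nearCount_block_add_three hz.mem_eisRing i).trans hcount
      add_four := nearCount_block_add_four hz.mem_eisRing hz.weightAtLeast i
      add_five := (nearCount_block_add_five hz.mem_eisRing hz.weightAtLeast i).trans hadd₀ }

/-- The increment of the exponents from the lowest digit of an extremal element of weight `n` to
the next digit appended below it. The choice `b` matters only for `n = 3`. -/
def digitRotation (n : ℕ) (b : Bool) : ZMod 6 := if n % 3 = 2 ∨ n = 3 ∧ b then 5 else 2

/-- The extremal element of weight `n` with lowest digit `ζ i`, where `b` decides which of the two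
rotations possible at weight `3` is used. -/
def extremal : ℕ → ZMod 6 → Bool → ℂ
  | 0, _, _ => 0
  | n + 1, i, b => block i (extremal n (i - digitRotation n b) b)

lemma extremal_succ_add_digitRotation (n : ℕ) (i : ZMod 6) (b : Bool) :
    extremal (n + 1) (i + digitRotation n b) b =
      block (i + digitRotation n b) (extremal n i b) := by
  rw [extremal, add_sub_cancel_right]

namespace IsExtremal

variable {x : ℂ} {n : ℕ} {i : ZMod 6}

lemma exists_rotation (h : IsExtremal x n i) {j : ZMod 6}
    (hj₀ : nearCount x (n + 1) j + nearCount x (n + 1) (j + 1) = nearBound (n + 1))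
    (hj₁ : nearCount x (n + 1) (j + 1) + nearCount x (n + 1) (j + 2) = nearBound (n + 1)) :
    ∃ b, j = i + digitRotation (n + 1) b := by
  obtain ⟨-, h₀, h₀₁, h₀₂, h₁, h₂, h₃, h₄, h₅⟩ := h
  have hlt := nearBound_strictMono (Nat.lt_add_one n)
  have ht := nearBound_succ_cases n
  rcases eq_add_cases i j with rfl | rfl | rfl | rfl | rfl | rfl
  all_goals
    try simp only [add_assoc (G := ZMod 6)] at hj₀ hj₁
    reduce_mod_char at hj₀ hj₁
  · omega
  · omega
  · refine ⟨false, ?_⟩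
    rw [digitRotation, if_neg]
    simp only [Bool.false_eq_true, and_false, or_false]
    omega
  · omega
  · omega
  · -- If `n % 3 = 2`, then the count at `i` is both `t / 2` and `t - 1`, where `t = nearBound n`.
    have hn : n % 3 = 1 ∨ nearBound n = 2 := by omega
    rw [nearBound_eq_two_iff] at hn
    have hn : (n + 1) % 3 = 2 ∨ n + 1 = 3 := by omega
    exact ⟨true, by rw [digitRotation, if_pos (by simpa using hn)]⟩

lemma block_rotation (hx : IsNaf x (n + 1)) (h : IsExtremal x n i) (b : Bool) :
    IsExtremal (block (i + digitRotation (n + 1) b) x) (n + 1) (i + digitRotation (n + 1) b) := by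
  obtain ⟨h, h₀, h₀₁, h₀₂, h₁, h₂, h₃, h₄, h₅⟩ := h
  have ht := nearBound_succ_cases n
  rw [digitRotation]
  split_ifs with hn
  · have hn' : n % 3 = 1 ∨ n = 2 ∧ nearBound n = 2 := by
      rw [nearBound_eq_two_iff]
      omega
    refine isExtremal_block hx ((repCount_block_eq_sseq_iff hx _).2 ⟨h, ?_, ?_⟩) ?_ ?_ <;>
      simp only [add_assoc] <;> reduce_mod_char <;> omega
  · refine isExtremal_block hx ((repCount_block_eq_sseq_iff hx _).2 ⟨h, ?_, ?_⟩) ?_ ?_ <;>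
      simp only [add_assoc] <;> reduce_mod_char <;> omega

end IsExtremal

lemma isNaf_extremal (n : ℕ) (i : ZMod 6) (b : Bool) : IsNaf (extremal n i b) n := by
  induction n generalizing i with
  | zero => exact .zero
  | succ n ih => exact (ih _).block i

lemma isExtremal_extremal (n : ℕ) (i : ZMod 6) (b : Bool) :
    IsExtremal (extremal (n + 1) i b) n i := by
  induction n generalizing i with
  | zero =>
    refine isExtremal_block .zero ?_ (by simp) (by simp)
    rw [repCount_block_eq_sseq_iff .zero]
    simp [repCount_zero_zero, nearCount_weight_zero, sseq, nearBound]
  | succ n ih =>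
    obtain ⟨j, rfl⟩ : ∃ j, i = j + digitRotation (n + 1) b := ⟨_, (sub_add_cancel _ _).symm⟩
    rw [extremal_succ_add_digitRotation]
    exact (ih j).block_rotation (isNaf_extremal _ _ _) b

lemma digitRotation_eq {n : ℕ} (hn : n ≠ 3) (b c : Bool) :
    digitRotation n b = digitRotation n c := by
  simp [digitRotation, hn]

lemma digitRotation_three_injective : Function.Injective (digitRotation 3) := by
  decide

lemma extremal_eq_of_le_three {n : ℕ} (hn : n ≤ 3) (i : ZMod 6) (b c : Bool) :
    extremal n i b = extremal n i c := by
  induction n generalizing i with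
  | zero => rfl
  | succ n ih => rw [extremal, extremal, digitRotation_eq (by omega) b c, ih (by omega)]

lemma exists_block_eq_extremal {z : ℂ} {n : ℕ} (hz : IsNaf z n) {i : ZMod 6}
    (h : repCount (block i z) (n + 1 : ℕ) = sseq (n + 1)) :
    ∃ b, block i z = extremal (n + 1) i b := by
  induction hz generalizing i with
  | zero => exact ⟨true, rfl⟩
  | @shift y n hy =>
    obtain ⟨-, hadd, -⟩ := (repCount_block_eq_sseq_iff hy.shift i).1 h
    rw [nearCount_eβ_mul hy.mem_eisRing hy.weightAtLeast,
      nearCount_eβ_mul hy.mem_eisRing hy.weightAtLeast] at hadd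
    obtain rfl : 0 = n := nearBound_strictMono.injective hadd
    exact ⟨true, by rw [hy.eq_zero, mul_zero]; rfl⟩
  | @block k y n hy ih =>
    obtain ⟨hcount, hadd₀, hadd₁⟩ := (repCount_block_eq_sseq_iff (hy.block k) i).1 h
    obtain ⟨b, hb⟩ := ih hcount
    rw [hb] at hadd₀ hadd₁ ⊢
    obtain ⟨c, rfl⟩ := (isExtremal_extremal n k b).exists_rotation hadd₀ hadd₁
    rcases eq_or_ne (n + 1) 3 with hn | hn
    · exact ⟨c, by rw [extremal_eq_of_le_three hn.le k b c, extremal_succ_add_digitRotation]⟩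
    · exact ⟨b, by rw [digitRotation_eq hn c b, extremal_succ_add_digitRotation]⟩

lemma extremal_injective {n : ℕ} (hn : 4 ≤ n) :
    Function.Injective fun p : ZMod 6 × Bool ↦ extremal n p.1 p.2 := by
  have hmem (m : ℕ) (i : ZMod 6) (b : Bool) : extremal m i b ∈ eisRing :=
    (isNaf_extremal m i b).mem_eisRing
  induction n, hn using Nat.le_induction with
  | base =>
    rintro ⟨i, b⟩ ⟨j, c⟩ h
    obtain ⟨rfl, h⟩ := block_inj (hmem _ _ _) (hmem _ _ _) h
    obtain ⟨hrot, -⟩ := block_inj (hmem _ _ _) (hmem _ _ _) h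
    obtain rfl := digitRotation_three_injective (sub_right_injective hrot)
    rfl
  | succ n _ ih =>
    rintro ⟨i, b⟩ ⟨j, c⟩ h
    obtain ⟨rfl, h⟩ := block_inj (hmem _ _ _) (hmem _ _ _) h
    obtain ⟨-, rfl⟩ := Prod.mk.inj (ih (a₁ := (_, b)) (a₂ := (_, c)) h)
    rfl

lemma exists_eq_block_of_isNaf {x : ℂ} {n : ℕ} (h : IsNaf x (n + 1))
    (hx : ¬ ∃ y ∈ EisZ, x = eβ * y) : ∃ i z, IsNaf z n ∧ x = block i z := by
  cases h with
  | shift h => exact absurd ⟨_, h.mem_eisRing, rfl⟩ hx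
  | block i h => exact ⟨i, _, h, rfl⟩

/-- For `N ≥ 4` there are exactly 12 Eisenstein integers `x` not divisible by
`β` whose 2-NAF representation has exactly `N` nonzero digits and which
attain `s_N` optimal representations. -/
theorem stmt15 (N : ℕ) (hN : 4 ≤ N) :
    {x : ℂ | x ∈ EisZ ∧ ¬ (∃ y ∈ EisZ, x = eβ * y) ∧
      (∃ l : List ℂ, eIsRep x l ∧ eNAF 2 l ∧ eweight l = N) ∧
      enumOpt x = sseq N}.ncard = 12 := by
  obtain ⟨n, rfl⟩ : ∃ n, N = n + 1 := ⟨N - 1, by omega⟩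
  have hset : {x : ℂ | x ∈ EisZ ∧ ¬ (∃ y ∈ EisZ, x = eβ * y) ∧
      (∃ l : List ℂ, eIsRep x l ∧ eNAF 2 l ∧ eweight l = n + 1) ∧
      enumOpt x = sseq (n + 1)} = Set.range fun p : ZMod 6 × Bool ↦ extremal (n + 1) p.1 p.2 := by
    ext x
    constructor
    · rintro ⟨-, hx, ⟨l, hl, hnaf, hw⟩, hcount⟩
      obtain ⟨i, z, hz, rfl⟩ := exists_eq_block_of_isNaf (hw ▸ isNaf_eweight hl hnaf) hx
      rw [(hz.block i).enumOpt_eq] at hcount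
      obtain ⟨b, hb⟩ := exists_block_eq_extremal hz hcount
      exact ⟨(i, b), hb.symm⟩
    · rintro ⟨⟨i, b⟩, rfl⟩
      have hx := isNaf_extremal (n + 1) i b
      have hz := (isNaf_extremal n (i - digitRotation n b) b).mem_eisRing
      exact ⟨hx.mem_eisRing, fun ⟨y, hy, h⟩ ↦ block_ne_eβ_mul i hz hy h,
        hx.exists_eIsRep, hx.enumOpt_eq.trans (isExtremal_extremal n i b).repCount_eq⟩
  rw [hset, Set.ncard_range_of_injective (extremal_injective hN)]
  simp
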